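/- If E_υ is continuous from above, then there exists a countably additive probability measure Q_α on (Ω, F) such that ∫ X dQ_α ≤ E_υ[X] for all X ∈ 𝒳 and sup_{X ∈ 𝒳_α} ∫ X dQ_α = sup_{X ∈ 𝒳_α} E_ῡ[X]. -/

import Mathlib

open MeasureTheory Filter Topology
open scoped ENNReal

/-- `X` belongs to the space `𝒳` of bounded measurable real-valued functions on `Ω`. -/
def MemX {Ω : Type*} [MeasurableSpace Ω] (X : Ω → ℝ) : Prop :=
  Measurable X ∧ ∃ M : ℝ, ∀ ω, |X ω| ≤ M

/-- A sublinear operator on `𝒳`: monotone, constant preserving, subadditive and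
positively homogeneous. -/
def IsSublinearOp {Ω : Type*} [MeasurableSpace Ω] (ρ : (Ω → ℝ) → ℝ) : Prop :=
  (∀ X Y : Ω → ℝ, MemX X → MemX Y → (∀ ω, Y ω ≤ X ω) → ρ Y ≤ ρ X) ∧
  (∀ c : ℝ, ρ (fun _ => c) = c) ∧
  (∀ X Y : Ω → ℝ, MemX X → MemX Y → ρ (X + Y) ≤ ρ X + ρ Y) ∧
  (∀ c : ℝ, 0 ≤ c → ∀ X : Ω → ℝ, MemX X → ρ (c • X) = c * ρ X)

/-- A linear functional on `𝒳`. -/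
def IsLinearOp {Ω : Type*} [MeasurableSpace Ω] (L : (Ω → ℝ) → ℝ) : Prop :=
  (∀ X Y : Ω → ℝ, MemX X → MemX Y → L (X + Y) = L X + L Y) ∧
  (∀ (c : ℝ) (X : Ω → ℝ), MemX X → L (c • X) = c * L X)

/-- `L` is dominated by `ρ` on `𝒳`. -/
def Dominated {Ω : Type*} [MeasurableSpace Ω] (L ρ : (Ω → ℝ) → ℝ) : Prop :=
  ∀ X : Ω → ℝ, MemX X → L X ≤ ρ X

/-- The conjugate operator `E_ῡ[X] := -E_υ[-X]`. -/
def conjOp {Ω : Type*} (ρ : (Ω → ℝ) → ℝ) : (Ω → ℝ) → ℝ := fun X => -ρ (-X)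

/-- The set `𝒳_α` of test functions at significance level `α`. -/
def testSet {Ω : Type*} [MeasurableSpace Ω] (Emu : (Ω → ℝ) → ℝ) (α : ℝ) : Set (Ω → ℝ) :=
  {X | MemX X ∧ (∀ ω, 0 ≤ X ω ∧ X ω ≤ 1) ∧ Emu X ≤ α}

/-- A sublinear operator `ρ` on `𝒳` is continuous from above: `ρ(X_n) ↓ 0` whenever
`X_n ∈ 𝒳` and `X_n ↓ 0` pointwise. -/
def ContFromAbove {Ω : Type*} [MeasurableSpace Ω] (ρ : (Ω → ℝ) → ℝ) : Prop :=
  ∀ X : ℕ → Ω → ℝ, (∀ n, MemX (X n)) → (∀ ω, Antitone fun n => X n ω) →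
    (∀ ω, Tendsto (fun n => X n ω) atTop (𝓝 0)) →
    Tendsto (fun n => ρ (X n)) atTop (𝓝 0)

/-!
The Mazur–Orlicz theorem, applied on `𝒳` to `E_υ` and the convex set `-𝒳_α`, gives a linear
functional `L ≤ E_υ` whose values on `𝒳_α` do not exceed `sup E_ῡ`; domination also gives
`E_ῡ ≤ L`, so the two suprema over `𝒳_α` agree. Since `L` is positive and dominated by an operator
continuous from above, it satisfies Daniell's condition and is integration against a measure.
-/

/-- A sublinear functional on a real vector space, as in the Hahn–Banach theorem; homogeneity
includes the factor `0`, so that `p 0 = 0`. -/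
structure IsSublinear {E : Type*} [AddCommGroup E] [Module ℝ E] (p : E → ℝ) : Prop where
  add_le : ∀ x y, p (x + y) ≤ p x + p y
  smul_eq : ∀ c : ℝ, 0 ≤ c → ∀ x, p (c • x) = c * p x

namespace IsSublinear

open scoped Pointwise

variable {E : Type*} [AddCommGroup E] [Module ℝ E] {p : E → ℝ}

protected lemma map_zero (hp : IsSublinear p) : p 0 = 0 := by
  simpa using hp.smul_eq 0 le_rfl 0

/-- The cone in `E × ℝ` generated by the epigraph of the sublinear functional `p` and the points
`(-k, -β)`, `k ∈ K`. A linear functional `(x, r) ↦ r - f x` is nonnegative on this cone exactly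
when `f ≤ p` everywhere and `β ≤ f` on `K`. -/
def separatingCone (hp : IsSublinear p) {K : Set E} (hK : Convex ℝ K) (hne : K.Nonempty) (β : ℝ) :
    PointedCone ℝ (E × ℝ) where
  carrier := {q | ∃ c : ℝ, 0 ≤ c ∧ ∃ z ∈ c • K, p (q.1 + z) ≤ q.2 + c * β}
  add_mem' := by
    rintro ⟨x, r⟩ ⟨x', r'⟩ ⟨c, hc, z, hz, h⟩ ⟨c', hc', z', hz', h'⟩
    refine ⟨c + c', add_nonneg hc hc', z + z', ?_, ?_⟩
    · exact hK.add_smul hc hc' ▸ Set.add_mem_add hz hz'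
    · calc p (x + x' + (z + z')) = p (x + z + (x' + z')) := by rw [add_add_add_comm]
        _ ≤ p (x + z) + p (x' + z') := hp.add_le _ _
        _ ≤ r + r' + (c + c') * β := by linarith
  zero_mem' :=
    ⟨0, le_rfl, 0, by simp [Set.zero_smul_set hne], by simp [hp.map_zero]⟩
  smul_mem' := by
    rintro ⟨t, ht⟩ ⟨x, r⟩ ⟨c, hc, z, hz, h⟩
    refine ⟨t * c, mul_nonneg ht hc, t • z, ?_, ?_⟩
    · exact mul_smul t c K ▸ Set.smul_mem_smul_set hz
    · calc p (t • x + t • z) = t * p (x + z) := by rw [← smul_add, hp.smul_eq t ht]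
        _ ≤ t * (r + c * β) := mul_le_mul_of_nonneg_left h ht
        _ = t * r + t * c * β := by ring

variable {K : Set E} {β : ℝ}

lemma mk_mem_separatingCone (hp : IsSublinear p) (hK : Convex ℝ K) (hne : K.Nonempty) (x : E) :
    (x, p x) ∈ hp.separatingCone hK hne β :=
  ⟨0, le_rfl, 0, by simp [Set.zero_smul_set hne], by simp⟩

lemma neg_mk_mem_separatingCone (hp : IsSublinear p) (hK : Convex ℝ K) (hne : K.Nonempty) {k : E}
    (hk : k ∈ K) : (-k, -β) ∈ hp.separatingCone hK hne β :=
  ⟨1, zero_le_one, k, by simpa using hk, by simp [hp.map_zero]⟩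

lemma nonneg_of_zero_mk_mem_separatingCone (hp : IsSublinear p) (hK : Convex ℝ K)
    (hne : K.Nonempty) (hβ : ∀ k ∈ K, β ≤ p k) {r : ℝ}
    (hr : ((0 : E), r) ∈ hp.separatingCone hK hne β) : 0 ≤ r := by
  obtain ⟨c, hc, _, ⟨k, hk, rfl⟩, h⟩ := hr
  have hpk : c * p k ≤ r + c * β := by simpa [hp.smul_eq c hc] using h
  linarith [mul_le_mul_of_nonneg_left (hβ k hk) hc]

/-- The **Mazur–Orlicz theorem**. -/
theorem exists_linearMap_le_of_convex (hp : IsSublinear p) (hK : Convex ℝ K) (hne : K.Nonempty)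
    (hβ : ∀ k ∈ K, β ≤ p k) :
    ∃ f : E →ₗ[ℝ] ℝ, (∀ x, f x ≤ p x) ∧ ∀ k ∈ K, β ≤ f k := by
  obtain ⟨g, g_eq, g_nonneg⟩ := riesz_extension (hp.separatingCone hK hne β)
    ((LinearMap.snd ℝ E ℝ).toPMap (Submodule.prod ⊥ ⊤))
    (by
      rintro ⟨⟨x, r⟩, hx, _⟩ hr
      obtain rfl : x = 0 := hx
      exact hp.nonneg_of_zero_mk_mem_separatingCone hK hne hβ hr)
    (fun ⟨x, r⟩ => ⟨⟨(0, p x - r), by simp⟩, by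
      simpa using hp.mk_mem_separatingCone hK hne x⟩)
  have g_apply (x : E) (r : ℝ) : g (x, r) = g (x, 0) + r := by
    have hr : g (0, r) = r := g_eq ⟨(0, r), by simp⟩
    calc g (x, r) = g (x, 0) + g (0, r) := by simp [← map_add]
      _ = g (x, 0) + r := by rw [hr]
  refine ⟨-g.comp (LinearMap.inl ℝ E ℝ), fun x => ?_, fun k hk => ?_⟩
  · have := g_nonneg _ (hp.mk_mem_separatingCone hK hne x)
    rw [g_apply] at this
    simpa [neg_le_iff_add_nonneg'] using this
  · have := g_nonneg _ (hp.neg_mk_mem_separatingCone hK hne hk)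
    rw [g_apply] at this
    have hneg : g (-k, 0) = -g (k, 0) := by simp [← map_neg]
    simpa [hneg] using this

end IsSublinear

section

variable {Ω : Type*} [MeasurableSpace Ω]

lemma MemX.add {X Y : Ω → ℝ} (hX : MemX X) (hY : MemX Y) : MemX (X + Y) := by
  obtain ⟨hX, M, hM⟩ := hX
  obtain ⟨hY, N, hN⟩ := hY
  exact ⟨hX.add hY, M + N, fun ω => (abs_add_le _ _).trans (add_le_add (hM ω) (hN ω))⟩

lemma MemX.const_smul {X : Ω → ℝ} (hX : MemX X) (c : ℝ) : MemX (c • X) := by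
  obtain ⟨hX, M, hM⟩ := hX
  refine ⟨hX.const_smul c, |c| * M, fun ω => ?_⟩
  simpa [abs_mul] using mul_le_mul_of_nonneg_left (hM ω) (abs_nonneg c)

lemma memX_const (c : ℝ) : MemX fun _ : Ω => c :=
  ⟨measurable_const, |c|, fun _ => le_rfl⟩

lemma MemX.indicator {X : Ω → ℝ} (hX : MemX X) {A : Set Ω} (hA : MeasurableSet A) :
    MemX (A.indicator X) := by
  obtain ⟨hmeas, M, hM⟩ := hX
  exact ⟨hmeas.indicator hA, M, fun ω => (norm_indicator_le_norm_self X ω).trans (hM ω)⟩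

lemma memX_simpleFunc (f : SimpleFunc Ω ℝ) : MemX f :=
  ⟨f.measurable, f.exists_forall_norm_le⟩

lemma MemX.integrable {X : Ω → ℝ} (hX : MemX X) (μ : Measure Ω) [IsFiniteMeasure μ] :
    Integrable X μ :=
  let ⟨hmeas, M, hM⟩ := hX
  .of_bound hmeas.aestronglyMeasurable M (.of_forall hM)

/-- Rounding down to a multiple of `ε` turns a bounded function into a simple one. -/
lemma MemX.exists_simpleFunc_le_and_le_add {X : Ω → ℝ} (hX : MemX X) {ε : ℝ} (hε : 0 < ε) :
    ∃ f : SimpleFunc Ω ℝ, (∀ ω, f ω ≤ X ω) ∧ ∀ ω, X ω ≤ f ω + ε := by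
  obtain ⟨hmeas, M, hM⟩ := hX
  have hfloor : Measurable fun ω => ⌊X ω / ε⌋ := (hmeas.div_const ε).floor
  have hfinite : (Set.range fun ω => ⌊X ω / ε⌋).Finite := by
    refine (Set.finite_Icc ⌊-M / ε⌋ ⌊M / ε⌋).subset ?_
    rintro _ ⟨ω, rfl⟩
    obtain ⟨hlo, hhi⟩ := abs_le.1 (hM ω)
    exact ⟨Int.floor_mono (by gcongr), Int.floor_mono (by gcongr)⟩
  let k : SimpleFunc Ω ℤ := ⟨_, fun n => hfloor (measurableSet_singleton n), hfinite⟩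
  refine ⟨k.map fun n : ℤ => (n : ℝ) * ε, fun ω => ?_, fun ω => ?_⟩
  · exact (le_div_iff₀ hε).1 (Int.floor_le _)
  · have := (div_le_iff₀ hε).1 (Int.lt_floor_add_one (X ω / ε)).le
    rwa [add_one_mul] at this

variable (Ω) in
/-- The space `𝒳` of bounded measurable functions, bundled so that Mathlib's linear maps and
pointwise order apply to it. -/
def boundedMeasurable : Submodule ℝ (Ω → ℝ) where
  carrier := {X | MemX X}
  add_mem' := MemX.add
  zero_mem' := memX_const 0
  smul_mem' c _ hX := hX.const_smul c

namespace boundedMeasurable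

/-- The constant function `1` as an element of `𝒳`. -/
def one : boundedMeasurable Ω := ⟨fun _ => 1, memX_const 1⟩

/-- Simple functions as elements of `𝒳`. -/
def ofSimpleFunc (f : SimpleFunc Ω ℝ) : boundedMeasurable Ω := ⟨f, memX_simpleFunc f⟩

/-- The indicator function `1_A` as an element of `𝒳`. -/
noncomputable def indicator (A : Set Ω) (hA : MeasurableSet A) : boundedMeasurable Ω :=
  ⟨A.indicator 1, (memX_const 1).indicator hA⟩

lemma indicator_nonneg (A : Set Ω) (hA : MeasurableSet A) : 0 ≤ indicator A hA :=
  fun ω => Set.indicator_nonneg (fun _ _ => zero_le_one) ω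

/-- Integration against a finite measure, as a linear functional on `𝒳`. -/
noncomputable def integralLinear (μ : Measure Ω) [IsFiniteMeasure μ] :
    boundedMeasurable Ω →ₗ[ℝ] ℝ where
  toFun X := ∫ ω, X.1 ω ∂μ
  map_add' X Y := integral_add (X.2.integrable μ) (Y.2.integrable μ)
  map_smul' c X := integral_const_mul c X.1

lemma monotone_integralLinear (μ : Measure Ω) [IsFiniteMeasure μ] :
    Monotone (integralLinear μ) := fun X Y hXY =>
  integral_mono (X.2.integrable μ) (Y.2.integrable μ) hXY

lemma integralLinear_indicator (μ : Measure Ω) [IsFiniteMeasure μ] (A : Set Ω)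
    (hA : MeasurableSet A) : integralLinear μ (indicator A hA) = μ.real A :=
  integral_indicator_one hA

variable {L L' : boundedMeasurable Ω →ₗ[ℝ] ℝ}

lemma map_nonneg_of_monotone (hL : Monotone L) {X : boundedMeasurable Ω} (hX : 0 ≤ X) :
    0 ≤ L X := by
  simpa using hL hX

lemma map_ofSimpleFunc_eq (h : ∀ A hA, L (indicator A hA) = L' (indicator A hA))
    (f : SimpleFunc Ω ℝ) : L (ofSimpleFunc f) = L' (ofSimpleFunc f) := by
  induction f using SimpleFunc.induction with
  | @const c A hA =>
    have hsmul : ofSimpleFunc (.piecewise A hA (.const Ω c) (.const Ω 0)) =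
        c • indicator A hA := by
      ext ω
      by_cases hω : ω ∈ A <;> simp [indicator, ofSimpleFunc, hω]
    rw [hsmul, map_smul, map_smul, h]
  | @add f g _ hf hg =>
    have hadd : ofSimpleFunc (f + g) = ofSimpleFunc f + ofSimpleFunc g := rfl
    rw [hadd, map_add, map_add, hf, hg]

lemma map_le_map_of_eq_on_indicator (hL : Monotone L) (hL' : Monotone L')
    (h : ∀ A hA, L (indicator A hA) = L' (indicator A hA)) (X : boundedMeasurable Ω) :
    L X ≤ L' X := by
  have hone : one = indicator (Set.univ : Set Ω) .univ := by
    ext ω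
    simp [indicator, one]
  have hbound : ∀ ε > 0, L X ≤ L' X + ε * L' one := fun ε hε => by
    obtain ⟨f, hfX, hXf⟩ := X.2.exists_simpleFunc_le_and_le_add hε
    have hle : X ≤ ofSimpleFunc f + ε • one := fun ω => by simpa [ofSimpleFunc, one] using hXf ω
    have hge : ofSimpleFunc f ≤ X := hfX
    calc L X ≤ L (ofSimpleFunc f + ε • one) := hL hle
      _ = L' (ofSimpleFunc f) + ε * L' one := by
        rw [map_add, map_smul, map_ofSimpleFunc_eq h, hone, h, smul_eq_mul]
      _ ≤ L' X + ε * L' one := by gcongr; exact hL' hge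
  have hlim : Tendsto (fun ε => L' X + ε * L' one) (𝓝[>] 0) (𝓝 (L' X)) := by
    refine Tendsto.mono_left ?_ nhdsWithin_le_nhds
    exact Continuous.tendsto' (by fun_prop) _ _ (by simp)
  exact ge_of_tendsto hlim (eventually_mem_nhdsWithin.mono hbound)

theorem ext_indicator_of_monotone (hL : Monotone L) (hL' : Monotone L')
    (h : ∀ A hA, L (indicator A hA) = L' (indicator A hA)) : L = L' :=
  LinearMap.ext fun X => le_antisymm (map_le_map_of_eq_on_indicator hL hL' h X)
    (map_le_map_of_eq_on_indicator hL' hL (fun A hA => (h A hA).symm) X)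

/-- Daniell's condition on a functional on `𝒳`: `L (X n) → 0` whenever `X n ↓ 0` pointwise. -/
def DaniellCondition (L : boundedMeasurable Ω → ℝ) : Prop :=
  ∀ X : ℕ → boundedMeasurable Ω, Antitone X → (∀ ω, Tendsto (fun n => (X n).1 ω) atTop (𝓝 0)) →
    Tendsto (fun n => L (X n)) atTop (𝓝 0)

lemma DaniellCondition.hasSum (hcont : DaniellCondition L) (hL : Monotone L)
    {X : ℕ → boundedMeasurable Ω} (hX : ∀ i, 0 ≤ X i) {S : boundedMeasurable Ω}
    (hS : ∀ ω, HasSum (fun i => (X i).1 ω) (S.1 ω)) : HasSum (fun i => L (X i)) (L S) := by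
  rw [hasSum_iff_tendsto_nat_of_nonneg fun i => map_nonneg_of_monotone hL (hX i)]
  have hrem : Tendsto (fun n => L (S - ∑ i ∈ Finset.range n, X i)) atTop (𝓝 0) := by
    refine hcont _ (antitone_nat_of_succ_le fun n => ?_) fun ω => ?_
    · rw [Finset.sum_range_succ]
      exact sub_le_sub_left (le_add_of_nonneg_right (hX n)) S
    · simpa using (hS ω).tendsto_sum_nat.const_sub (S.1 ω)
  simpa using hrem.const_sub (L S)

lemma hasSum_indicator_iUnion {A : ℕ → Set Ω} (hA : ∀ i, MeasurableSet (A i))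
    (hdisj : Pairwise (Function.onFun Disjoint A)) (ω : Ω) :
    HasSum (fun i => (indicator (A i) (hA i)).1 ω) ((indicator (⋃ i, A i) (.iUnion hA)).1 ω) := by
  by_cases hω : ω ∈ ⋃ i, A i
  · obtain ⟨i, hi⟩ := Set.mem_iUnion.1 hω
    have hother (j : ℕ) (hj : j ≠ i) : (indicator (A j) (hA j)).1 ω = 0 :=
      Set.indicator_of_notMem (fun hωj => (hdisj hj).notMem_of_mem_left hωj hi) _
    convert! hasSum_single i hother using 1
    simp [indicator, Set.indicator_of_mem hω, Set.indicator_of_mem hi]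
  · have hout (i : ℕ) : ω ∉ A i := fun hi => hω (Set.mem_iUnion.2 ⟨i, hi⟩)
    simp [indicator, hout]

/-- The **Daniell representation theorem** for bounded measurable functions. -/
theorem DaniellCondition.exists_isFiniteMeasure_integralLinear_eq (hcont : DaniellCondition L)
    (hL : Monotone L) :
    ∃ (Q : Measure Ω) (_ : IsFiniteMeasure Q), integralLinear Q = L := by
  let Q : Measure Ω := .ofMeasurable (fun A hA => ENNReal.ofReal (L (indicator A hA)))
    (by
      have hempty : indicator (∅ : Set Ω) .empty = 0 := by ext ω; simp [indicator]
      simp [hempty])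
    (fun A hA hdisj => by
      have hsum := hcont.hasSum hL (fun i => indicator_nonneg (A i) (hA i))
        (hasSum_indicator_iUnion hA hdisj)
      rw [← hsum.tsum_eq, ENNReal.ofReal_tsum_of_nonneg
        (fun i => map_nonneg_of_monotone hL (indicator_nonneg (A i) (hA i))) hsum.summable])
  have hQ (A : Set Ω) (hA : MeasurableSet A) : Q A = ENNReal.ofReal (L (indicator A hA)) :=
    Measure.ofMeasurable_apply A hA
  have hfin : IsFiniteMeasure Q := ⟨by rw [hQ _ .univ]; exact ENNReal.ofReal_lt_top⟩
  refine ⟨Q, hfin, ext_indicator_of_monotone (monotone_integralLinear Q) hL fun A hA => ?_⟩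
  rw [integralLinear_indicator, Measure.real, hQ A hA,
    ENNReal.toReal_ofReal (map_nonneg_of_monotone hL (indicator_nonneg A hA))]

end boundedMeasurable

open boundedMeasurable

lemma conjOp_le_of_dominated {ρ : (Ω → ℝ) → ℝ} {L : boundedMeasurable Ω →ₗ[ℝ] ℝ}
    (hLρ : ∀ X, L X ≤ ρ X) (X : boundedMeasurable Ω) : conjOp ρ X ≤ L X := by
  simpa [conjOp, neg_le] using hLρ (-X)

namespace IsSublinearOp

variable {ρ : (Ω → ℝ) → ℝ} {L : boundedMeasurable Ω →ₗ[ℝ] ℝ}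

lemma apply_le_of_le_const (hρ : IsSublinearOp ρ) {X : Ω → ℝ} (hX : MemX X) {c : ℝ}
    (hc : ∀ ω, X ω ≤ c) : ρ X ≤ c :=
  (hρ.1 _ X (memX_const c) hX hc).trans_eq (hρ.2.1 c)

lemma isSublinear (hρ : IsSublinearOp ρ) : IsSublinear fun X : boundedMeasurable Ω => ρ X where
  add_le X Y := hρ.2.2.1 X Y X.2 Y.2
  smul_eq c hc X := hρ.2.2.2 c hc X X.2

lemma conjOp_le_of_le_const (hρ : IsSublinearOp ρ) {X : Ω → ℝ} (hX : MemX X) {c : ℝ}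
    (hc : ∀ ω, X ω ≤ c) : conjOp ρ X ≤ c := by
  have hneg : ρ (fun _ => -c) ≤ ρ (-X) :=
    hρ.1 _ _ ((boundedMeasurable Ω).neg_mem hX) (memX_const (-c)) fun ω => neg_le_neg (hc ω)
  rw [hρ.2.1] at hneg
  exact neg_le.1 hneg

lemma monotone_of_dominated (hρ : IsSublinearOp ρ) (hLρ : ∀ X, L X ≤ ρ X) : Monotone L := by
  intro X Y hXY
  have hnonpos : L (X - Y) ≤ 0 :=
    (hLρ _).trans (hρ.apply_le_of_le_const (X - Y).2 fun ω => sub_nonpos.2 (hXY ω))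
  rwa [map_sub, sub_nonpos] at hnonpos

lemma map_one_of_dominated (hρ : IsSublinearOp ρ) (hLρ : ∀ X, L X ≤ ρ X) : L one = 1 := by
  refine le_antisymm ((hLρ one).trans_eq (hρ.2.1 1)) ?_
  have hneg : L (-one) ≤ -1 := (hLρ (-one)).trans_eq (hρ.2.1 (-1))
  rwa [map_neg, neg_le_neg_iff] at hneg

lemma daniellCondition_of_dominated (hρ : IsSublinearOp ρ) (hcont : ContFromAbove ρ)
    (hLρ : ∀ X, L X ≤ ρ X) : DaniellCondition L := by
  intro X hanti hlim
  have hnonneg (n : ℕ) : 0 ≤ X n := fun ω =>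
    Antitone.le_of_tendsto (fun _ _ hmn => hanti hmn ω) (hlim ω) n
  exact squeeze_zero (fun n => map_nonneg_of_monotone (hρ.monotone_of_dominated hLρ) (hnonneg n))
    (fun n => hLρ (X n)) (hcont _ (fun n => (X n).2) (fun ω _ _ hmn => hanti hmn ω) hlim)

theorem exists_isProbabilityMeasure_of_dominated (hρ : IsSublinearOp ρ) (hcont : ContFromAbove ρ)
    (hLρ : ∀ X, L X ≤ ρ X) :
    ∃ Q : Measure Ω, IsProbabilityMeasure Q ∧
      ∀ X : boundedMeasurable Ω, ∫ ω, X.1 ω ∂Q = L X := by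
  obtain ⟨Q, _, hQ⟩ := (hρ.daniellCondition_of_dominated hcont hLρ)
    |>.exists_isFiniteMeasure_integralLinear_eq (hρ.monotone_of_dominated hLρ)
  have hint (X : boundedMeasurable Ω) : ∫ ω, X.1 ω ∂Q = L X := LinearMap.congr_fun hQ X
  have hreal : Q.real Set.univ = 1 := by
    simpa [one] using (hint one).trans (hρ.map_one_of_dominated hLρ)
  exact ⟨Q, ⟨(ENNReal.toReal_eq_one_iff _).1 hreal⟩, hint⟩

theorem exists_linearMap_dominated_le_of_convex (hρ : IsSublinearOp ρ) {K : Set (Ω → ℝ)}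
    (hKX : K ⊆ boundedMeasurable Ω) (hK : Convex ℝ K) (hne : K.Nonempty) {s : ℝ}
    (hs : ∀ X ∈ K, conjOp ρ X ≤ s) :
    ∃ L : boundedMeasurable Ω →ₗ[ℝ] ℝ, (∀ X, L X ≤ ρ X) ∧
      ∀ X : boundedMeasurable Ω, (X : Ω → ℝ) ∈ K → L X ≤ s := by
  have hK' : Convex ℝ {X : boundedMeasurable Ω | -(X : Ω → ℝ) ∈ K} :=
    hK.linear_preimage (-(boundedMeasurable Ω).subtype)
  obtain ⟨X₀, hX₀⟩ := hne
  obtain ⟨L, hLρ, hLK⟩ := hρ.isSublinear.exists_linearMap_le_of_convex hK' (β := -s)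
    ⟨-⟨X₀, hKX hX₀⟩, by simpa using hX₀⟩
    (fun X hX => by simpa [conjOp, neg_le] using hs _ hX)
  refine ⟨L, hLρ, fun X hX => ?_⟩
  simpa using hLK (-X) (by simpa using hX)

end IsSublinearOp

lemma convex_testSet {ρ : (Ω → ℝ) → ℝ} (hρ : IsSublinearOp ρ) (α : ℝ) :
    Convex ℝ (testSet ρ α) := by
  rintro X ⟨hX, hX01, hXα⟩ Y ⟨hY, hY01, hYα⟩ a b ha hb hab
  refine ⟨(hX.const_smul a).add (hY.const_smul b), fun ω => ?_, ?_⟩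
  · exact convex_Icc (0 : ℝ) 1 (hX01 ω) (hY01 ω) ha hb hab
  · calc ρ (a • X + b • Y) ≤ ρ (a • X) + ρ (b • Y) :=
          hρ.2.2.1 _ _ (hX.const_smul a) (hY.const_smul b)
      _ = a * ρ X + b * ρ Y := by rw [hρ.2.2.2 a ha X hX, hρ.2.2.2 b hb Y hY]
      _ ≤ a * α + b * α := by gcongr
      _ = α := by rw [← add_mul, hab, one_mul]

lemma zero_mem_testSet {ρ : (Ω → ℝ) → ℝ} (hρ : IsSublinearOp ρ) {α : ℝ} (hα : 0 ≤ α) :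
    0 ∈ testSet ρ α :=
  ⟨memX_const 0, fun _ => ⟨le_rfl, zero_le_one⟩, (hρ.2.1 0).trans_le hα⟩

lemma bddAbove_conjOp_image_testSet (σ : (Ω → ℝ) → ℝ) {ρ : (Ω → ℝ) → ℝ} (hρ : IsSublinearOp ρ)
    (α : ℝ) : BddAbove (conjOp ρ '' testSet σ α) := by
  refine ⟨1, ?_⟩
  rintro _ ⟨X, hX, rfl⟩
  exact hρ.conjOp_le_of_le_const hX.1 fun ω => (hX.2.1 ω).2

theorem exists_probability_Qalpha_general {Eups : (Ω → ℝ) → ℝ} (hEups : IsSublinearOp Eups)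
    (hcont : ContFromAbove Eups) {K : Set (Ω → ℝ)} (hKX : K ⊆ boundedMeasurable Ω)
    (hK : Convex ℝ K) (hne : K.Nonempty) (hbdd : BddAbove (conjOp Eups '' K)) :
    ∃ Qa : Measure Ω, IsProbabilityMeasure Qa ∧
      (∀ X : Ω → ℝ, MemX X → ∫ ω, X ω ∂Qa ≤ Eups X) ∧
      sSup ((fun X : Ω → ℝ => ∫ ω, X ω ∂Qa) '' K) = sSup (conjOp Eups '' K) := by
  have hs : ∀ X ∈ K, conjOp Eups X ≤ sSup (conjOp Eups '' K) := fun X hX =>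
    le_csSup hbdd ⟨X, hX, rfl⟩
  obtain ⟨L, hLρ, hLs⟩ := hEups.exists_linearMap_dominated_le_of_convex hKX hK hne hs
  obtain ⟨Q, hQ, hQL⟩ := hEups.exists_isProbabilityMeasure_of_dominated hcont hLρ
  have hQs : ∀ X ∈ K, ∫ ω, X ω ∂Q ≤ sSup (conjOp Eups '' K) := fun X hX =>
    (hQL ⟨X, hKX hX⟩).trans_le (hLs _ hX)
  have hQconj : ∀ X ∈ K, conjOp Eups X ≤ ∫ ω, X ω ∂Q := fun X hX =>
    (conjOp_le_of_dominated hLρ ⟨X, hKX hX⟩).trans_eq (hQL _).symm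
  refine ⟨Q, hQ, fun X hX => (hQL ⟨X, hX⟩).trans_le (hLρ _), le_antisymm ?_ ?_⟩
  · exact csSup_le (hne.image _) (Set.forall_mem_image.2 hQs)
  · refine csSup_le (hne.image _) (Set.forall_mem_image.2 fun X hX => ?_)
    exact (hQconj X hX).trans (le_csSup ⟨_, Set.forall_mem_image.2 hQs⟩ ⟨X, hX, rfl⟩)

end

/-- If `E_υ` is continuous from above, then the functional `Q_α` of Corollary 4.2 can
be taken to be a countably additive probability measure. -/
theorem exists_probability_Qalpha {Ω : Type*} [MeasurableSpace Ω]
    (Emu Eups : (Ω → ℝ) → ℝ)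
    (hEmu : IsSublinearOp Emu) (hEups : IsSublinearOp Eups)
    (α : ℝ) (hα0 : 0 < α) (hα1 : α < 1)
    (hcont : ContFromAbove Eups) :
    ∃ Qa : Measure Ω, IsProbabilityMeasure Qa ∧
      (∀ X : Ω → ℝ, MemX X → ∫ ω, X ω ∂Qa ≤ Eups X) ∧
      sSup ((fun X : Ω → ℝ => ∫ ω, X ω ∂Qa) '' testSet Emu α) =
        sSup (conjOp Eups '' testSet Emu α) :=
  exists_probability_Qalpha_general hEups hcont (fun _ hX => hX.1) (convex_testSet hEmu α)
    ⟨0, zero_mem_testSet hEmu hα0.le⟩ (bddAbove_conjOp_image_testSet Emu hEups α)
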